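/- arXiv:1711.10240 — 7 statements merged into one kernel-verified Lean document; each statement's English description precedes it below -/
import Mathlib

section
/- (Lemma on the optimal covariant measure-and-prepare strategy.) Let G be a finite group, U : G → U(d) an irreducible unitary representation on ℂ^d, U' : G → U(d') a unitary representation on ℂ^{d'}, and let Ω be a Hermitian operator on ℂ^{d'}⊗ℂ^d satisfying [Ω, U'_g⊗U_g] = 0 for all g ∈ G. For a finite POVM {P_i} on ℂ^d and density matrices {ρ_i} on ℂ^{d'}, define the measure-and-prepare score S({P_i},{ρ_i}) := Σ_i Tr[(ρ_i⊗P_i) Ω]. Then: (i) for every unit vector φ ∈ ℂ^d, the covariant family {(d/|G|) U_g|φ⟩⟨φ|U_g†}_{g∈G} is a POVM, i.e. (d/|G|) Σ_{g∈G} U_g|φ⟩⟨φ|U_g† = I_d; and (ii) the supremum of S over all finite POVMs and all families of density matrices equals the supremum, over unit vectors ψ ∈ ℂ^{d'} and φ ∈ ℂ^d, of (d/|G|) Σ_{g∈G} ⟨(U'_g ψ)⊗(U_g φ), Ω ((U'_g ψ)⊗(U_g φ))⟩; that is, the optimal measure-and-prepare strategy measures a covariant POVM {P_g = (d/|G|)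 U_g|φ⟩⟨φ|U_g†} and prepares the covariant states |ψ_g⟩ = U'_g|ψ⟩. -/
open Matrix Kronecker BigOperators ComplexOrder

noncomputable section

/-- Rank-one projector `|v⟩⟨v|` onto a vector. -/
def outer {ι : Type*} (v : ι → ℂ) : Matrix ι ι ℂ :=
  Matrix.vecMulVec v (star v)

/-- Tensor product of two vectors. -/
def tensorVec {d' d : ℕ} (a : Fin d' → ℂ) (b : Fin d → ℂ) : Fin d' × Fin d → ℂ :=
  fun p => a p.1 * b p.2

lemma outer_tensor {d' d : ℕ} (a : Fin d' → ℂ) (b : Fin d → ℂ) :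
    outer a ⊗ₖ outer b = outer (tensorVec a b) := by
  ext ⟨i, j⟩ ⟨k, l⟩
  simp [outer, tensorVec, vecMulVec_apply]
  ring

lemma trace_outer_mul {ι : Type*} [Fintype ι] (v : ι → ℂ) (M : Matrix ι ι ℂ) :
    (outer v * M).trace = star v ⬝ᵥ M *ᵥ v := by
  rw [outer, vecMulVec_mul, trace_vecMulVec, dotProduct_comm, dotProduct_mulVec]

lemma star_dot_self {ι : Type*} [Fintype ι] (v : ι → ℂ) :
    star v ⬝ᵥ v = ((∑ i, ‖v i‖ ^ 2 : ℝ) : ℂ) := by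
  simp only [dotProduct, Pi.star_apply, Complex.ofReal_sum]
  refine Finset.sum_congr rfl fun i _ => ?_
  rw [RCLike.star_def, Complex.conj_mul']
  push_cast
  rfl

lemma trace_outer {ι : Type*} [Fintype ι] (v : ι → ℂ) :
    (outer v).trace = ((∑ i, ‖v i‖ ^ 2 : ℝ) : ℂ) := by
  rw [outer, trace_vecMulVec, dotProduct_comm, star_dot_self]

lemma conj_outer {ι : Type*} [Fintype ι] (A : Matrix ι ι ℂ) (v : ι → ℂ) :
    A * outer v * Aᴴ = outer (A *ᵥ v) := by
  rw [outer, outer, mul_vecMulVec, vecMulVec_mul, star_mulVec]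

lemma nsq_unitary {ι : Type*} [Fintype ι] [DecidableEq ι] (A : Matrix ι ι ℂ) (hA : Aᴴ * A = 1)
    (v : ι → ℂ) : (∑ i, ‖(A *ᵥ v) i‖ ^ 2) = ∑ i, ‖v i‖ ^ 2 := by
  have h : star (A *ᵥ v) ⬝ᵥ (A *ᵥ v) = star v ⬝ᵥ v := by
    rw [star_mulVec, ← dotProduct_mulVec, mulVec_mulVec, hA, one_mulVec]
  rw [star_dot_self, star_dot_self] at h
  exact_mod_cast h

lemma tensor_mulVec {d' d : ℕ} (A : Matrix (Fin d') (Fin d') ℂ) (B : Matrix (Fin d) (Fin d) ℂ)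
    (a : Fin d' → ℂ) (b : Fin d → ℂ) :
    tensorVec (A *ᵥ a) (B *ᵥ b) = (A ⊗ₖ B) *ᵥ tensorVec a b := by
  ext ⟨i, j⟩
  simp only [tensorVec, mulVec, dotProduct, kroneckerMap_apply, Fintype.sum_prod_type,
    Finset.sum_mul_sum]
  refine Finset.sum_congr rfl fun x _ => Finset.sum_congr rfl fun y _ => ?_
  ring

/-- product expectation value -/
def prodExp {d' d : ℕ} (Ω : Matrix (Fin d' × Fin d) (Fin d' × Fin d) ℂ)
    (a : Fin d' → ℂ) (b : Fin d → ℂ) : ℝ :=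
  (star (tensorVec a b) ⬝ᵥ Ω *ᵥ tensorVec a b).re

lemma prodExp_cov {d' d : ℕ} (Ω : Matrix (Fin d' × Fin d) (Fin d' × Fin d) ℂ)
    (A : Matrix (Fin d') (Fin d') ℂ) (B : Matrix (Fin d) (Fin d) ℂ)
    (hA : Aᴴ * A = 1) (hB : Bᴴ * B = 1) (h : Ω * (A ⊗ₖ B) = (A ⊗ₖ B) * Ω)
    (a : Fin d' → ℂ) (b : Fin d → ℂ) :
    prodExp Ω (A *ᵥ a) (B *ᵥ b) = prodExp Ω a b := by
  unfold prodExp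
  rw [tensor_mulVec, mulVec_mulVec, h, star_mulVec, ← mulVec_mulVec, ← dotProduct_mulVec,
    mulVec_mulVec, conjTranspose_kronecker, ← mul_kronecker_mul, hA, hB, one_kronecker_one,
    one_mulVec]

lemma prodExp_smul {d' d : ℕ} (Ω : Matrix (Fin d' × Fin d) (Fin d' × Fin d) ℂ)
    (r t : ℝ) (a : Fin d' → ℂ) (b : Fin d → ℂ) :
    prodExp Ω ((r : ℂ) • a) ((t : ℂ) • b) = r ^ 2 * t ^ 2 * prodExp Ω a b := by
  have h : tensorVec ((r : ℂ) • a) ((t : ℂ) • b) = ((r * t : ℝ) : ℂ) • tensorVec a b := by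
    ext ⟨i, j⟩
    simp [tensorVec]
    ring
  unfold prodExp
  rw [h, star_smul, mulVec_smul, smul_dotProduct, dotProduct_smul, smul_smul, smul_eq_mul,
    RCLike.star_def, Complex.conj_ofReal, ← Complex.ofReal_mul, Complex.re_ofReal_mul]
  ring

lemma norm_le_one_of_nsq {ι : Type*} [Fintype ι] (v : ι → ℂ) (h : (∑ i, ‖v i‖ ^ 2) = 1) (i : ι) :
    ‖v i‖ ≤ 1 := by
  have : ‖v i‖ ^ 2 ≤ ∑ i, ‖v i‖ ^ 2 :=
    Finset.single_le_sum (f := fun i => ‖v i‖ ^ 2) (fun i _ => by positivity) (Finset.mem_univ i)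
  rw [h] at this
  nlinarith [norm_nonneg (v i)]

lemma prodExp_bdd {d' d : ℕ} (Ω : Matrix (Fin d' × Fin d) (Fin d' × Fin d) ℂ)
    (a : Fin d' → ℂ) (b : Fin d → ℂ) (ha : (∑ i, ‖a i‖ ^ 2) = 1) (hb : (∑ i, ‖b i‖ ^ 2) = 1) :
    prodExp Ω a b ≤ ∑ p, ∑ q, ‖Ω p q‖ := by
  have ht : ∀ p, ‖tensorVec a b p‖ ≤ 1 := fun p => by
    rw [tensorVec, norm_mul]
    exact mul_le_one₀ (norm_le_one_of_nsq a ha _) (norm_nonneg _) (norm_le_one_of_nsq b hb _)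
  unfold prodExp
  refine (Complex.re_le_norm _).trans ((norm_sum_le _ _).trans (Finset.sum_le_sum fun p _ => ?_))
  rw [norm_mul, Pi.star_apply, norm_star]
  refine (mul_le_of_le_one_left (norm_nonneg _) (ht p)).trans ?_
  refine (norm_sum_le _ _).trans (Finset.sum_le_sum fun q _ => ?_)
  rw [norm_mul]
  exact mul_le_of_le_one_right (norm_nonneg _) (ht q)

lemma exists_normalize {ι : Type*} [Fintype ι] (a : ι → ℂ) (ha : a ≠ 0) :
    ∃ (r : ℝ) (u : ι → ℂ), a = (r : ℂ) • u ∧ (∑ i, ‖u i‖ ^ 2) = 1 ∧ (∑ i, ‖a i‖ ^ 2) = r ^ 2 := by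
  have hpos : 0 < ∑ i, ‖a i‖ ^ 2 := by
    obtain ⟨i, hi⟩ := Function.ne_iff.mp ha
    refine Finset.sum_pos' (fun i _ => by positivity) ⟨i, Finset.mem_univ i, ?_⟩
    have : 0 < ‖a i‖ := norm_pos_iff.mpr hi
    positivity
  set N := ∑ i, ‖a i‖ ^ 2 with hN
  have hs : 0 < Real.sqrt N := Real.sqrt_pos.mpr hpos
  have hsq : Real.sqrt N ^ 2 = N := Real.sq_sqrt hpos.le
  refine ⟨Real.sqrt N, ((Real.sqrt N)⁻¹ : ℂ) • a, ?_, ?_, hsq.symm⟩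
  · rw [smul_smul, mul_inv_cancel₀ (by exact_mod_cast hs.ne'), one_smul]
  · simp only [Pi.smul_apply, smul_eq_mul, norm_mul, mul_pow, ← Finset.mul_sum, norm_inv,
      Complex.norm_real, Real.norm_eq_abs, inv_pow, sq_abs]
    rw [hsq, ← hN, inv_mul_cancel₀ hpos.ne']

lemma prodExp_le {d' d : ℕ} (Ω : Matrix (Fin d' × Fin d) (Fin d' × Fin d) ℂ) (M : ℝ)
    (hM : ∀ a b, (∑ i, ‖a i‖ ^ 2) = 1 → (∑ i, ‖b i‖ ^ 2) = 1 → prodExp Ω a b ≤ M)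
    (a : Fin d' → ℂ) (b : Fin d → ℂ) :
    prodExp Ω a b ≤ M * ((∑ i, ‖a i‖ ^ 2) * (∑ i, ‖b i‖ ^ 2)) := by
  by_cases ha : a = 0
  · subst ha
    have := prodExp_smul Ω 0 1 0 b
    simp at this
    simp [this]
  by_cases hb : b = 0
  · subst hb
    have := prodExp_smul Ω 1 0 a 0
    simp at this
    simp [this]
  obtain ⟨r, u, hu, hu1, hr⟩ := exists_normalize a ha
  obtain ⟨t, w, hw, hw1, ht⟩ := exists_normalize b hb
  rw [hr, ht, hu, hw, prodExp_smul, mul_comm M]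
  exact mul_le_mul_of_nonneg_left (hM u w hu1 hw1) (by positivity)

lemma score_le {d' d : ℕ} (Ω : Matrix (Fin d' × Fin d) (Fin d' × Fin d) ℂ) (M : ℝ)
    (hM : ∀ a b, (∑ i, ‖a i‖ ^ 2) = 1 → (∑ i, ‖b i‖ ^ 2) = 1 → prodExp Ω a b ≤ M)
    (ρ : Matrix (Fin d') (Fin d') ℂ) (P : Matrix (Fin d) (Fin d) ℂ)
    (hρ : ρ.PosSemidef) (hP : P.PosSemidef) :
    ((ρ ⊗ₖ P) * Ω).trace.re ≤ M * (ρ.trace.re * P.trace.re) := by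
  obtain ⟨m, A, hA⟩ := Matrix.posSemidef_iff_eq_sum_vecMulVec.mp hρ
  obtain ⟨n, B, hB⟩ := Matrix.posSemidef_iff_eq_sum_vecMulVec.mp hP
  have hA' : ρ = ∑ i, outer (A i) := hA
  have hB' : P = ∑ i, outer (B i) := hB
  have hk : ρ ⊗ₖ P = ∑ i, ∑ j, outer (tensorVec (A i) (B j)) := by
    simp_rw [← outer_tensor]
    rw [hA', hB']
    ext ⟨i, j⟩ ⟨k, l⟩
    simp [Matrix.sum_apply, Finset.sum_mul_sum]
  have h1 : ((ρ ⊗ₖ P) * Ω).trace.re = ∑ i, ∑ j, prodExp Ω (A i) (B j) := by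
    rw [hk]
    simp only [Finset.sum_mul, trace_sum, trace_outer_mul, Complex.re_sum]
    rfl
  have h2 : ρ.trace.re = ∑ i, ∑ k, ‖A i k‖ ^ 2 := by
    rw [hA']
    simp only [trace_sum, trace_outer, Complex.re_sum, Complex.ofReal_re]
  have h3 : P.trace.re = ∑ i, ∑ k, ‖B i k‖ ^ 2 := by
    rw [hB']
    simp only [trace_sum, trace_outer, Complex.re_sum, Complex.ofReal_re]
  rw [h1, h2, h3, Finset.sum_mul_sum, Finset.mul_sum]
  refine Finset.sum_le_sum fun i _ => ?_
  rw [Finset.mul_sum]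
  exact Finset.sum_le_sum fun j _ => prodExp_le Ω M hM _ _

lemma covariant_povm {d : ℕ} (hd : 0 < d)
    (G : Type) [Group G] [Fintype G]
    (U : G → Matrix (Fin d) (Fin d) ℂ)
    (hUmul : ∀ g h, U (g * h) = U g * U h)
    (hUunitary : ∀ g, (U g)ᴴ * U g = 1)
    (hUirred : ∀ W : Submodule ℂ (Fin d → ℂ),
      (∀ g, ∀ v ∈ W, (U g) *ᵥ v ∈ W) → W = ⊥ ∨ W = ⊤)
    (φ : Fin d → ℂ) (hφ : (∑ i, ‖φ i‖ ^ 2) = 1) :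
      ((d : ℂ) / (Fintype.card G : ℂ)) • ∑ g : G, U g * outer φ * (U g)ᴴ = 1 := by
  set A := ∑ g : G, U g * outer φ * (U g)ᴴ with hA
  have hcomm : ∀ h, U h * A = A * U h := by
    intro h
    have : U h * A * (U h)ᴴ = A := by
      rw [hA, Finset.mul_sum, Finset.sum_mul]
      refine Fintype.sum_equiv (Equiv.mulLeft h) _ _ fun g => ?_
      simp [hUmul, conjTranspose_mul, Matrix.mul_assoc]
    calc U h * A = U h * A * ((U h)ᴴ * U h) := by rw [hUunitary, Matrix.mul_one]
      _ = U h * A * (U h)ᴴ * U h := by simp only [Matrix.mul_assoc]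
      _ = A * U h := by rw [this]
  haveI : Nonempty (Fin d) := ⟨⟨0, hd⟩⟩
  obtain ⟨μ, hμ⟩ := Module.End.exists_eigenvalue (Matrix.toLin' A)
  have htop : Module.End.eigenspace (Matrix.toLin' A) μ = ⊤ := by
    refine (hUirred _ ?_).resolve_left hμ
    intro g v hv
    rw [Module.End.mem_eigenspace_iff, toLin'_apply] at hv ⊢
    rw [mulVec_mulVec, ← hcomm, ← mulVec_mulVec, hv, mulVec_smul]
  have hAμ : A = μ • 1 := by
    apply Matrix.toLin'.injective
    refine LinearMap.ext fun v => ?_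
    have hv : v ∈ Module.End.eigenspace (Matrix.toLin' A) μ := htop ▸ Submodule.mem_top
    rw [Module.End.mem_eigenspace_iff] at hv
    rw [hv]
    simp
  have htr : A.trace = Fintype.card G := by
    rw [hA, trace_sum]
    have : ∀ g, (U g * outer φ * (U g)ᴴ).trace = 1 := fun g => by
      rw [conj_outer, trace_outer, nsq_unitary _ (hUunitary g), hφ, Complex.ofReal_one]
    simp [this]
  have htr2 : μ * d = Fintype.card G := by
    rw [← htr, hAμ]
    simp
  have hG : (Fintype.card G : ℂ) ≠ 0 := by exact_mod_cast Fintype.card_ne_zero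
  rw [hAμ, smul_smul, div_mul_eq_mul_div, mul_comm (d : ℂ), htr2, div_self hG, one_smul]

/-- optimal covariant measure-and-prepare strategy: let `U` be an
irreducible unitary representation of a finite group `G` on `ℂ^d`, `U'` a unitary
representation on `ℂ^{d'}`, and `Ω` a Hermitian operator commuting with all
`U'_g ⊗ U_g`.  Then (i) for every unit vector `φ`, the covariant family
`{(d/|G|) U_g |φ⟩⟨φ| U_g†}` is a POVM, and (ii) the supremum of the score
`S({P_i},{ρ_i}) = Σ_i Tr[(ρ_i ⊗ P_i) Ω]` over all finite POVMs and families of density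
matrices equals the supremum over unit vectors `ψ, φ` of
`(d/|G|) Σ_g ⟨(U'_g ψ)⊗(U_g φ), Ω ((U'_g ψ)⊗(U_g φ))⟩`. -/
theorem optimal_covariant_MP {d' d : ℕ} (hd : 0 < d)
    (G : Type) [Group G] [Fintype G]
    (U : G → Matrix (Fin d) (Fin d) ℂ)
    (hU1 : U 1 = 1) (hUmul : ∀ g h, U (g * h) = U g * U h)
    (hUunitary : ∀ g, (U g)ᴴ * U g = 1)
    (hUirred : ∀ W : Submodule ℂ (Fin d → ℂ),
      (∀ g, ∀ v ∈ W, (U g) *ᵥ v ∈ W) → W = ⊥ ∨ W = ⊤)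
    (U' : G → Matrix (Fin d') (Fin d') ℂ)
    (hU'1 : U' 1 = 1) (hU'mul : ∀ g h, U' (g * h) = U' g * U' h)
    (hU'unitary : ∀ g, (U' g)ᴴ * U' g = 1)
    (Ω : Matrix (Fin d' × Fin d) (Fin d' × Fin d) ℂ)
    (hΩ : Ω.IsHermitian)
    (hcov : ∀ g, Ω * (U' g ⊗ₖ U g) = (U' g ⊗ₖ U g) * Ω) :
    -- (i) the covariant family is a POVM
    (∀ φ : Fin d → ℂ, (∑ i, ‖φ i‖ ^ 2) = 1 →
      ((d : ℂ) / (Fintype.card G : ℂ)) • ∑ g : G, U g * outer φ * (U g)ᴴ = 1) ∧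
    -- (ii) the optimal measure-and-prepare score is achieved by a covariant strategy
    sSup { s : ℝ | ∃ (n : ℕ) (P : Fin n → Matrix (Fin d) (Fin d) ℂ)
          (ρ : Fin n → Matrix (Fin d') (Fin d') ℂ),
          (∀ i, (P i).PosSemidef) ∧ (∑ i, P i) = 1 ∧
          (∀ i, (ρ i).PosSemidef ∧ (ρ i).trace = 1) ∧
          s = (∑ i, ((ρ i ⊗ₖ P i) * Ω).trace).re } =
      sSup { s : ℝ | ∃ (ψ : Fin d' → ℂ) (φ : Fin d → ℂ),
          (∑ i, ‖ψ i‖ ^ 2) = 1 ∧ (∑ i, ‖φ i‖ ^ 2) = 1 ∧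
          s = (d : ℝ) / (Fintype.card G : ℝ) *
            ∑ g : G, (star (tensorVec (U' g *ᵥ ψ) (U g *ᵥ φ)) ⬝ᵥ
              Ω *ᵥ tensorVec (U' g *ᵥ ψ) (U g *ᵥ φ)).re } := by
  have part1 := covariant_povm hd G U hUmul hUunitary hUirred
  refine ⟨part1, ?_⟩
  have hG : (Fintype.card G : ℝ) ≠ 0 := by exact_mod_cast Fintype.card_ne_zero
  have hdR : (0 : ℝ) < d := by exact_mod_cast hd
  have hsum : ∀ (ψ : Fin d' → ℂ) (φ : Fin d → ℂ), (d : ℝ) / (Fintype.card G : ℝ) *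
      ∑ g : G, (star (tensorVec (U' g *ᵥ ψ) (U g *ᵥ φ)) ⬝ᵥ
        Ω *ᵥ tensorVec (U' g *ᵥ ψ) (U g *ᵥ φ)).re = d * prodExp Ω ψ φ := by
    intro ψ φ
    have : ∀ g, (star (tensorVec (U' g *ᵥ ψ) (U g *ᵥ φ)) ⬝ᵥ
        Ω *ᵥ tensorVec (U' g *ᵥ ψ) (U g *ᵥ φ)).re = prodExp Ω ψ φ := fun g =>
      prodExp_cov Ω _ _ (hU'unitary g) (hUunitary g) (hcov g) ψ φ
    simp only [this, Finset.sum_const, Finset.card_univ, nsmul_eq_mul]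
    field_simp
  set L := { s : ℝ | ∃ (n : ℕ) (P : Fin n → Matrix (Fin d) (Fin d) ℂ)
          (ρ : Fin n → Matrix (Fin d') (Fin d') ℂ),
          (∀ i, (P i).PosSemidef) ∧ (∑ i, P i) = 1 ∧
          (∀ i, (ρ i).PosSemidef ∧ (ρ i).trace = 1) ∧
          s = (∑ i, ((ρ i ⊗ₖ P i) * Ω).trace).re } with hL
  set R := { s : ℝ | ∃ (ψ : Fin d' → ℂ) (φ : Fin d → ℂ),
          (∑ i, ‖ψ i‖ ^ 2) = 1 ∧ (∑ i, ‖φ i‖ ^ 2) = 1 ∧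
          s = (d : ℝ) / (Fintype.card G : ℝ) *
            ∑ g : G, (star (tensorVec (U' g *ᵥ ψ) (U g *ᵥ φ)) ⬝ᵥ
              Ω *ᵥ tensorVec (U' g *ᵥ ψ) (U g *ᵥ φ)).re } with hR
  have hRL : R ⊆ L := by
    rintro s ⟨ψ, φ, hψ, hφ, rfl⟩
    let e := Fintype.equivFin G
    have hc : (0 : ℂ) ≤ (d : ℂ) / (Fintype.card G : ℂ) := by
      have : (0 : ℝ) ≤ (d : ℝ) / (Fintype.card G : ℝ) := by positivity
      have h2 := Complex.zero_le_real.mpr this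
      push_cast at h2
      exact h2
    refine ⟨Fintype.card G,
      fun i => ((d : ℂ) / (Fintype.card G : ℂ)) • outer (U (e.symm i) *ᵥ φ),
      fun i => outer (U' (e.symm i) *ᵥ ψ), fun i => ?_, ?_, fun i => ⟨?_, ?_⟩, ?_⟩
    · exact (posSemidef_vecMulVec_self_star _).smul hc
    · rw [← Finset.smul_sum, ← part1 φ hφ]
      congr 1
      exact Fintype.sum_equiv e.symm _ _ fun i => (conj_outer _ _).symm
    · exact posSemidef_vecMulVec_self_star _
    · rw [trace_outer, nsq_unitary _ (hU'unitary _), hψ, Complex.ofReal_one]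
    · simp only [kronecker_smul, smul_mul, trace_smul, outer_tensor, trace_outer_mul,
        ← Finset.smul_sum]
      have hr : ((d : ℂ) / (Fintype.card G : ℂ)) = (((d : ℝ) / (Fintype.card G : ℝ) : ℝ) : ℂ) := by
        push_cast
        rfl
      rw [hr, smul_eq_mul, Complex.re_ofReal_mul, Complex.re_sum]
      congr 1
      exact Fintype.sum_equiv e _ _ fun g => by simp
  have hRb : BddAbove R := by
    refine ⟨d * ∑ p, ∑ q, ‖Ω p q‖, ?_⟩
    rintro s ⟨ψ, φ, hψ, hφ, rfl⟩
    rw [hsum]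
    exact mul_le_mul_of_nonneg_left (prodExp_bdd Ω ψ φ hψ hφ) hdR.le
  have hLR : ∀ s ∈ L, s ≤ sSup R := by
    rintro s ⟨n, P, ρ, hP, hP1, hρ, rfl⟩
    have hM : ∀ a b, (∑ i, ‖a i‖ ^ 2) = 1 → (∑ i, ‖b i‖ ^ 2) = 1 →
        prodExp Ω a b ≤ sSup R / d := by
      intro a b ha hb
      rw [le_div_iff₀ hdR, mul_comm]
      exact le_csSup hRb ⟨a, b, ha, hb, (hsum a b).symm⟩
    have htr : ∑ i, (P i).trace.re = d := by
      rw [← Complex.re_sum, ← trace_sum, hP1]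
      simp
    rw [Complex.re_sum]
    calc _ ≤ ∑ i, sSup R / d * (P i).trace.re := Finset.sum_le_sum fun i _ => by
            have := score_le Ω _ hM (ρ i) (P i) (hρ i).1 (hP i)
            rwa [(hρ i).2, Complex.one_re, one_mul] at this
      _ = sSup R := by
            rw [← Finset.mul_sum, htr, div_mul_cancel₀ _ hdR.ne']
  rcases Nat.eq_zero_or_pos d' with h0 | hpos
  · have hLe : L = ∅ := by
      refine Set.eq_empty_of_forall_notMem ?_
      rintro s ⟨n, P, ρ, hP, hP1, hρ, rfl⟩
      subst h0
      haveI : IsEmpty (Fin n) := ⟨fun i => by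
        have := (hρ i).2
        simp [Matrix.trace] at this⟩
      have := congrFun (congrFun hP1 ⟨0, hd⟩) ⟨0, hd⟩
      simp at this
    have hRe : R = ∅ := Set.subset_empty_iff.mp (hLe ▸ hRL)
    rw [hLe, hRe]
  · have hRn : R.Nonempty := by
      refine ⟨_, Pi.single ⟨0, hpos⟩ 1, Pi.single ⟨0, hd⟩ 1, ?_, ?_, rfl⟩
      · rw [Finset.sum_eq_single ⟨0, hpos⟩] <;> simp +contextual [Pi.single_apply]
      · rw [Finset.sum_eq_single ⟨0, hd⟩] <;> simp +contextual [Pi.single_apply]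
    exact le_antisymm (csSup_le (hRn.mono hRL) hLR)
      (csSup_le_csSup ⟨sSup R, hLR⟩ hRn hRL)


end
end

section
/- (Fidelity benchmark for teleportation of pure states.) For every d ≥ 2, let P_+ be the orthogonal projector onto the symmetric subspace of ℂ^d⊗ℂ^d and let Ω := P_+ / Tr[P_+] = 2 P_+ / (d(d+1)). Then the maximum of Tr[C Ω] over all separable positive semidefinite operators C on ℂ^d⊗ℂ^d with Tr_{A'}[C] = I_d equals 2/(d+1). Equivalently, the maximal average fidelity achievable by measure-and-prepare channels on uniformly (Haar) distributed pure input states in dimension d is 2/(d+1). -/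
open Matrix Kronecker BigOperators ComplexOrder

noncomputable section

/-- A separable operator on `ℂ^d ⊗ ℂ^d`: a finite sum of tensor products of
positive semidefinite operators. -/
def Separable {d' d : ℕ} (C : Matrix (Fin d' × Fin d) (Fin d' × Fin d) ℂ) : Prop :=
  ∃ (n : ℕ) (A : Fin n → Matrix (Fin d') (Fin d') ℂ)
    (B : Fin n → Matrix (Fin d) (Fin d) ℂ),
    (∀ k, (A k).PosSemidef) ∧ (∀ k, (B k).PosSemidef) ∧ C = ∑ k, A k ⊗ₖ B k

/-- Partial trace over the first tensor factor. -/
def trA' {d' d : ℕ} (C : Matrix (Fin d' × Fin d) (Fin d' × Fin d) ℂ) :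
    Matrix (Fin d) (Fin d) ℂ :=
  Matrix.of fun i j => ∑ i', C (i', i) (i', j)

/-- The swap operator on `ℂ^d ⊗ ℂ^d`. -/
def swapOp (d : ℕ) : Matrix (Fin d × Fin d) (Fin d × Fin d) ℂ :=
  Matrix.of fun p q => if p.1 = q.2 ∧ p.2 = q.1 then 1 else 0

/-- The projector onto the symmetric subspace of `ℂ^d ⊗ ℂ^d`. -/
def symProj (d : ℕ) : Matrix (Fin d × Fin d) (Fin d × Fin d) ℂ :=
  (2 : ℂ)⁻¹ • (1 + swapOp d)

theorem swapOp_conj (d : ℕ) : (swapOp d)ᴴ = swapOp d := by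
  ext ⟨a, b⟩ ⟨c, e⟩
  simp only [conjTranspose_apply, swapOp, of_apply]
  by_cases h : a = e ∧ b = c
  · rw [if_pos h, if_pos ⟨h.2.symm, h.1.symm⟩]; simp
  · rw [if_neg h, if_neg (fun h2 => h ⟨h2.2.symm, h2.1.symm⟩)]; simp

theorem mul_swapOp_apply {d : ℕ} (C : Matrix (Fin d × Fin d) (Fin d × Fin d) ℂ)
    (p : Fin d × Fin d) (a b : Fin d) : (C * swapOp d) p (a, b) = C p (b, a) := by
  rw [mul_apply, Finset.sum_eq_single (b, a)]
  · simp [swapOp]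
  · rintro ⟨x, y⟩ _ h
    have : ¬ (x = b ∧ y = a) := fun h2 => h (by rw [h2.1, h2.2])
    simp [swapOp, this]
  · simp

theorem swapOp_sq (d : ℕ) : swapOp d * swapOp d = 1 := by
  ext ⟨a, b⟩ ⟨c, e⟩
  rw [mul_swapOp_apply]
  simp [swapOp, one_apply]

theorem trace_swap_le {d : ℕ} (C : Matrix (Fin d × Fin d) (Fin d × Fin d) ℂ)
    (hC : C.PosSemidef) : ((C * swapOp d).trace).re ≤ (C.trace).re := by
  have h := (hC.conjTranspose_mul_mul_same (1 - swapOp d)).trace_nonneg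
  have e : ((1 - swapOp d)ᴴ * C * (1 - swapOp d)).trace
      = 2 * (C.trace - (C * swapOp d).trace) := by
    rw [trace_mul_comm, ← Matrix.mul_assoc, trace_mul_comm, conjTranspose_sub, swapOp_conj,
      conjTranspose_one]
    have : (1 - swapOp d) * (1 - swapOp d) = (2 : ℂ) • (1 - swapOp d) := by
      rw [sub_mul, mul_sub, mul_sub, swapOp_sq, two_smul]; simp; abel
    rw [this, Matrix.mul_smul, trace_smul, mul_sub, Matrix.mul_one, trace_sub, smul_eq_mul]
  rw [e] at h
  have h2 := (Complex.le_def.1 h).1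
  simp at h2
  linarith

theorem trace_formula {d : ℕ} (C : Matrix (Fin d × Fin d) (Fin d × Fin d) ℂ)
    (h : trA' C = 1) :
    C.trace = d := by
  have := congrArg trace h
  rw [trace_one, Fintype.card_fin] at this
  rw [← this]
  simp only [trace, diag_apply, trA', of_apply]
  rw [Fintype.sum_prod_type, Finset.sum_comm]

theorem fid_formula {d : ℕ} (C : Matrix (Fin d × Fin d) (Fin d × Fin d) ℂ)
    (h : trA' C = 1) :
    ((C * ((2 / (d * (d + 1)) : ℂ) • symProj d)).trace).re
      = (1 / (d * (d + 1)) : ℝ) * (d + ((C * swapOp d).trace).re) := by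
  have e : (C * ((2 / (d * (d + 1)) : ℂ) • symProj d)).trace
      = ((1 / (d * (d + 1)) : ℝ) : ℂ) * (d + (C * swapOp d).trace) := by
    rw [symProj, Matrix.mul_smul, Matrix.mul_smul, Matrix.mul_add, Matrix.mul_one, trace_smul,
      trace_smul, trace_add, trace_formula C h, smul_eq_mul, smul_eq_mul]
    push_cast
    ring
  rw [e, Complex.re_ofReal_mul]
  simp

/-- fidelity benchmark for teleportation of pure states: for `d ≥ 2` and
`Ω = P₊ / Tr[P₊] = 2 P₊ / (d(d+1))` with `P₊` the symmetric projector, the maximum of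
`Tr[C Ω]` over separable positive semidefinite `C` with `Tr_{A'}[C] = I` (i.e. the
maximal average fidelity of measure-and-prepare channels on Haar-random pure states)
equals `2/(d+1)`. -/
theorem teleportation_benchmark (d : ℕ) (hd : 2 ≤ d) :
    IsGreatest
      { s : ℝ | ∃ C : Matrix (Fin d × Fin d) (Fin d × Fin d) ℂ,
          Separable C ∧ C.PosSemidef ∧ trA' C = 1 ∧
          s = ((C * ((2 / (d * (d + 1)) : ℂ) • symProj d)).trace).re }
      (2 / (d + 1) : ℝ) := by
  have hd0 : (d : ℝ) ≠ 0 := by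
    have : d ≠ 0 := by omega
    exact_mod_cast this
  have hd1 : (d : ℝ) + 1 ≠ 0 := by positivity
  constructor
  · have hpt : trA' (diagonal (fun p : Fin d × Fin d => if p.1 = p.2 then (1 : ℂ) else 0)) = 1 := by
      ext i j
      simp only [trA', of_apply, diagonal_apply, one_apply, Prod.mk.injEq, true_and]
      by_cases h : i = j <;> simp [h]
    refine ⟨diagonal (fun p => if p.1 = p.2 then 1 else 0), ?_, ?_, hpt, ?_⟩
    · refine ⟨d, fun i => diagonal (Pi.single i 1), fun i => diagonal (Pi.single i 1), ?_, ?_, ?_⟩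
      · intro k
        refine PosSemidef.diagonal ?_
        exact Pi.single_nonneg.2 zero_le_one
      · intro k
        refine PosSemidef.diagonal ?_
        exact Pi.single_nonneg.2 zero_le_one
      · simp only [diagonal_kronecker_diagonal]
        ext p q
        rw [Matrix.sum_apply]
        by_cases h : p = q
        · subst h
          simp [Pi.single_apply, eq_comm]
        · simp [h]
    · refine PosSemidef.diagonal ?_
      intro p
      dsimp only
      split_ifs <;> simp
    · rw [fid_formula _ hpt]
      have : (diagonal (fun p : Fin d × Fin d => if p.1 = p.2 then (1 : ℂ) else 0)
          * swapOp d).trace = d := by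
        simp only [trace, diag_apply]
        rw [Fintype.sum_prod_type]
        simp only [mul_swapOp_apply, diagonal_apply, Prod.mk.injEq]
        have : ∀ x y : Fin d, (if x = y ∧ y = x then (if x = y then (1 : ℂ) else 0) else 0)
          = if x = y then 1 else 0 := by
          intro x y
          by_cases h : x = y <;> simp [h]
        simp [this]
      rw [this, Complex.natCast_re]
      field_simp
      ring
  · rintro s ⟨C, -, hC, ht, rfl⟩
    rw [fid_formula C ht]
    have h1 := trace_swap_le C hC
    rw [trace_formula C ht, Complex.natCast_re] at h1
    calc _ ≤ (1 / (d * (d + 1)) : ℝ) * (d + d) := by gcongr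
      _ = _ := by field_simp; ring

end
end

section
/- (Entanglement-based CHSH benchmark.) Let X̃ := (Z+X)/√2 and Z̃ := (Z−X)/√2, where X and Z are the Pauli matrices on ℂ², and let Ω := (X̃⊗X̃ + Z̃⊗Z̃)/√2 on ℂ²⊗ℂ². Then the maximum of Tr[C Ω] over all separable positive semidefinite operators C on ℂ²⊗ℂ² with Tr_{A'}[C] = I₂ equals √2. Hence any experimental value of the CHSH test (performed on one half of a maximally entangled pair sent through a device) exceeding √2 certifies a quantum advantage over all measure-and-prepare channels. -/
open Matrix Kronecker BigOperators ComplexOrder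

noncomputable section

/-- The Pauli matrix `X`. -/
def pauliX : Matrix (Fin 2) (Fin 2) ℂ := !![0, 1; 1, 0]

/-- The Pauli matrix `Z`. -/
def pauliZ : Matrix (Fin 2) (Fin 2) ℂ := !![1, 0; 0, -1]

/-- The rotated Pauli matrix `X̃ = (Z + X)/√2`. -/
def pauliXt : Matrix (Fin 2) (Fin 2) ℂ := ((Real.sqrt 2 : ℂ))⁻¹ • (pauliZ + pauliX)

/-- The rotated Pauli matrix `Z̃ = (Z − X)/√2`. -/
def pauliZt : Matrix (Fin 2) (Fin 2) ℂ := ((Real.sqrt 2 : ℂ))⁻¹ • (pauliZ - pauliX)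

theorem omega_eq : pauliXt ⊗ₖ pauliXt + pauliZt ⊗ₖ pauliZt
    = pauliX ⊗ₖ pauliX + pauliZ ⊗ₖ pauliZ := by
  have h : ((Real.sqrt 2 : ℂ))⁻¹ * ((Real.sqrt 2 : ℂ))⁻¹ = 1 / 2 := by
    rw [← mul_inv, ← Complex.ofReal_mul, Real.mul_self_sqrt (by norm_num)]
    norm_num
  have h2 : pauliXt ⊗ₖ pauliXt + pauliZt ⊗ₖ pauliZt = (1 / 2 : ℂ) •
      ((pauliZ + pauliX) ⊗ₖ (pauliZ + pauliX) + (pauliZ - pauliX) ⊗ₖ (pauliZ - pauliX)) := by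
    rw [← h]
    simp only [pauliXt, pauliZt, smul_kronecker, kronecker_smul, smul_smul]
    rw [smul_add]
  rw [h2]
  ext ⟨i, j⟩ ⟨k, l⟩
  fin_cases i <;> fin_cases j <;> fin_cases k <;> fin_cases l <;>
    simp [pauliX, pauliZ] <;> norm_num

theorem trace_term (A B : Matrix (Fin 2) (Fin 2) ℂ) :
    ((A ⊗ₖ B) * (pauliX ⊗ₖ pauliX + pauliZ ⊗ₖ pauliZ)).trace
      = (A 0 1 + A 1 0) * (B 0 1 + B 1 0) + (A 0 0 - A 1 1) * (B 0 0 - B 1 1) := by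
  rw [mul_add, ← mul_kronecker_mul, ← mul_kronecker_mul, trace_add, trace_kronecker,
    trace_kronecker]
  simp [pauliX, pauliZ, trace_fin_two, mul_apply, Fin.sum_univ_two]
  ring

theorem psd_facts {A : Matrix (Fin 2) (Fin 2) ℂ} (hA : A.PosSemidef) :
    ∃ a d x y : ℝ, A 0 0 = a ∧ A 1 1 = d ∧ A 0 1 = ⟨x, y⟩ ∧ A 1 0 = ⟨x, -y⟩ ∧ 0 ≤ a ∧ 0 ≤ d ∧
      x ^ 2 + y ^ 2 ≤ a * d := by
  have h0 := hA.diag_nonneg (i := 0)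
  have h1 := hA.diag_nonneg (i := 1)
  have hd := hA.det_nonneg
  have hh : A 1 0 = star (A 0 1) := (hA.1.apply 1 0).symm
  rw [Complex.le_def] at h0 h1 hd
  have e0 : A 0 0 = ((A 0 0).re : ℂ) := Complex.ext rfl (by simpa using h0.2.symm)
  have e1 : A 1 1 = ((A 1 1).re : ℂ) := Complex.ext rfl (by simpa using h1.2.symm)
  refine ⟨(A 0 0).re, (A 1 1).re, (A 0 1).re, (A 0 1).im, e0, e1, rfl, ?_, h0.1, h1.1, ?_⟩
  · rw [hh]; rfl
  · have := hd.1
    rw [det_fin_two, hh, e0, e1] at this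
    simp at this
    nlinarith

theorem term_le {A B : Matrix (Fin 2) (Fin 2) ℂ} (hA : A.PosSemidef) (hB : B.PosSemidef) :
    (((A ⊗ₖ B) * (pauliX ⊗ₖ pauliX + pauliZ ⊗ₖ pauliZ)).trace).re ≤ ((A ⊗ₖ B).trace).re := by
  obtain ⟨a, d, x, y, h1, h2, h3, h4, ha, hd, hx⟩ := psd_facts hA
  obtain ⟨b, e, u, v, k1, k2, k3, k4, hb, he, hu⟩ := psd_facts hB
  rw [trace_term, trace_kronecker, trace_fin_two, trace_fin_two, h1, h2, h3, h4, k1, k2, k3, k4]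
  simp
  have p : (2 * x) ^ 2 + (a - d) ^ 2 ≤ (a + d) ^ 2 := by nlinarith [sq_nonneg y]
  have q : (2 * u) ^ 2 + (b - e) ^ 2 ≤ (b + e) ^ 2 := by nlinarith [sq_nonneg v]
  have : (2 * x * (2 * u) + (a - d) * (b - e)) ≤ (a + d) * (b + e) := by
    refine (abs_le_of_sq_le_sq' ?_ (by positivity)).2
    have := mul_le_mul p q (by positivity) (by positivity)
    nlinarith [sq_nonneg (2 * x * (b - e) - (a - d) * (2 * u))]
  linarith

theorem trace_trA (C : Matrix (Fin 2 × Fin 2) (Fin 2 × Fin 2) ℂ) : (trA' C).trace = C.trace := by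
  simp [trA', trace, Fintype.sum_prod_type]
  ring

theorem re_smul_sqrt (z : ℂ) : (((Real.sqrt 2 : ℂ))⁻¹ * z).re = (Real.sqrt 2)⁻¹ * z.re := by
  rw [← Complex.ofReal_inv, Complex.re_ofReal_mul]

/-- entanglement-based CHSH benchmark: with
`Ω = (X̃⊗X̃ + Z̃⊗Z̃)/√2`, the maximum of `Tr[C Ω]` over separable positive semidefinite
`C` on `ℂ²⊗ℂ²` with `Tr_{A'}[C] = I` equals `√2`. -/
theorem chsh_benchmark :
    IsGreatest
      { s : ℝ | ∃ C : Matrix (Fin 2 × Fin 2) (Fin 2 × Fin 2) ℂ,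
          Separable C ∧ C.PosSemidef ∧ trA' C = 1 ∧
          s = ((C * (((Real.sqrt 2 : ℂ))⁻¹ •
            (pauliXt ⊗ₖ pauliXt + pauliZt ⊗ₖ pauliZt))).trace).re }
      (Real.sqrt 2) := by
  have hs : (Real.sqrt 2)⁻¹ * 2 = Real.sqrt 2 := by
    have := Real.mul_self_sqrt (show (0:ℝ) ≤ 2 by norm_num)
    have h0 : Real.sqrt 2 ≠ 0 := by positivity
    field_simp
    linarith
  rw [omega_eq]
  constructor
  · have hA : ∀ k : Fin 2, (Matrix.single k k (1:ℂ)).PosSemidef := by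
      intro k
      rw [← diagonal_single]
      apply PosSemidef.diagonal
      intro i
      by_cases h : i = k
      · subst h; simp
      · simp [h]
    refine ⟨∑ k : Fin 2, Matrix.single k k (1:ℂ) ⊗ₖ Matrix.single k k (1:ℂ),
      ⟨2, _, _, hA, hA, rfl⟩, ?_, ?_, ?_⟩
    · exact posSemidef_sum _ fun k _ => (hA k).kronecker (hA k)
    · ext i j
      fin_cases i <;> fin_cases j <;> simp [trA', Fin.sum_univ_two, Matrix.single]
    · rw [Matrix.mul_smul, trace_smul, smul_eq_mul, re_smul_sqrt, Fin.sum_univ_two, add_mul, trace_add,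
        trace_term, trace_term]
      simp [Matrix.single]
      norm_num
      exact hs.symm
  · rintro s ⟨C, ⟨n, A, B, hA, hB, rfl⟩, -, ht, rfl⟩
    have h := trace_trA (∑ k, A k ⊗ₖ B k)
    rw [ht] at h
    rw [Matrix.mul_smul, trace_smul, smul_eq_mul, re_smul_sqrt, Finset.sum_mul, trace_sum, Complex.re_sum]
    refine le_trans ?_ hs.le
    gcongr
    refine (Finset.sum_le_sum fun k _ => term_le (hA k) (hB k)).trans ?_
    rw [← Complex.re_sum, ← trace_sum, ← h]
    simp

end
end

section
/- (Product numerical range of the CHSH operator.) Let X̃ := (Z+X)/√2 and Z̃ := (Z−X)/√2, where X and Z are the Pauli matrices on ℂ². Then sup{⟨a⊗b, (X̃⊗X̃ + Z̃⊗Z̃)(a⊗b)⟩ : a, b ∈ ℂ² unit vectors} = 1; equivalently, the product numerical range Λ⊗(X̃⊗X̃ + Z̃⊗Z̃) equals 1 (whereas the operator norm of X̃⊗X̃ + Z̃⊗Z̃ equals 2). -/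
open Matrix Kronecker BigOperators ComplexOrder

noncomputable section

/-- The product numerical range `Λ⊗(M) = sup {⟨a⊗b, M (a⊗b)⟩ : a, b unit vectors}`. -/
def pnr {d' d : ℕ} (M : Matrix (Fin d' × Fin d) (Fin d' × Fin d) ℂ) : ℝ :=
  sSup { r : ℝ | ∃ (a : Fin d' → ℂ) (b : Fin d → ℂ),
    (∑ i, ‖a i‖ ^ 2) = 1 ∧ (∑ i, ‖b i‖ ^ 2) = 1 ∧
    r = (star (fun p : Fin d' × Fin d => a p.1 * b p.2) ⬝ᵥ
          M *ᵥ (fun p : Fin d' × Fin d => a p.1 * b p.2)).re }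

theorem chsh_aux_sq : ((Real.sqrt 2 : ℂ))⁻¹ * ((Real.sqrt 2 : ℂ))⁻¹ = 1 / 2 := by
  have h : ((Real.sqrt 2 : ℂ)) * (Real.sqrt 2 : ℂ) = 2 := by
    rw [← Complex.ofReal_mul, Real.mul_self_sqrt (by norm_num)]; norm_num
  rw [← mul_inv, h]; norm_num

theorem chsh_aux_M : pauliXt ⊗ₖ pauliXt + pauliZt ⊗ₖ pauliZt
    = pauliZ ⊗ₖ pauliZ + pauliX ⊗ₖ pauliX := by
  have h : pauliXt ⊗ₖ pauliXt + pauliZt ⊗ₖ pauliZt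
      = (((Real.sqrt 2 : ℂ))⁻¹ * ((Real.sqrt 2 : ℂ))⁻¹) •
        ((pauliZ + pauliX) ⊗ₖ (pauliZ + pauliX) + (pauliZ - pauliX) ⊗ₖ (pauliZ - pauliX)) := by
    ext ⟨i, j⟩ ⟨k, l⟩
    simp only [pauliXt, pauliZt, Matrix.add_apply, Matrix.smul_apply, kroneckerMap_apply,
      smul_eq_mul]
    ring
  rw [h, chsh_aux_sq]
  ext ⟨i, j⟩ ⟨k, l⟩
  simp only [Matrix.add_apply, Matrix.sub_apply, Matrix.smul_apply, kroneckerMap_apply,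
      smul_eq_mul]
  ring

theorem chsh_aux_mulVec (v : Fin 2 × Fin 2 → ℂ) :
    (pauliZ ⊗ₖ pauliZ + pauliX ⊗ₖ pauliX) *ᵥ v = fun p =>
      !![v (0,0) + v (1,1), v (1,0) - v (0,1); v (0,1) - v (1,0), v (0,0) + v (1,1)] p.1 p.2 := by
  ext ⟨i, j⟩
  fin_cases i <;> fin_cases j <;>
    simp [Matrix.mulVec, dotProduct, Fintype.sum_prod_type, pauliX, pauliZ] <;> ring

theorem chsh_aux_bd (p q r s x y z w : ℝ) (h1 : p^2+q^2+(r^2+s^2) = 1)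
    (h2 : x^2+y^2+(z^2+w^2) = 1) :
    (p^2+q^2-(r^2+s^2))*(x^2+y^2-(z^2+w^2)) + (2*(p*r+q*s))*(2*(x*z+y*w)) ≤ 1 := by
  have e : ∀ p q r s : ℝ, p^2+q^2+(r^2+s^2) = 1 →
      (p^2+q^2-(r^2+s^2))^2 + (2*(p*r+q*s))^2 ≤ 1 := by
    intro p q r s h
    have : (p^2+q^2-(r^2+s^2))^2 + (2*(p*r+q*s))^2
      = (p^2+q^2+(r^2+s^2))^2 - (2*(p*s-q*r))^2 := by ring
    rw [this, h]; nlinarith [sq_nonneg (2*(p*s-q*r))]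
  have := e _ _ _ _ h1
  have := e _ _ _ _ h2
  nlinarith [sq_nonneg ((p^2+q^2-(r^2+s^2))-(x^2+y^2-(z^2+w^2))),
    sq_nonneg ((2*(p*r+q*s))-(2*(x*z+y*w)))]

theorem chsh_aux_pnr : pnr (pauliZ ⊗ₖ pauliZ + pauliX ⊗ₖ pauliX) = 1 := by
  unfold pnr
  apply IsGreatest.csSup_eq
  constructor
  · refine ⟨![1, 0], ![1, 0], by simp, by simp, ?_⟩
    rw [chsh_aux_mulVec]
    simp [dotProduct, Fintype.sum_prod_type]
  · rintro t ⟨a, b, ha, hb, rfl⟩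
    rw [chsh_aux_mulVec]
    simp only [Fin.sum_univ_two, Complex.sq_norm, Complex.normSq_apply] at ha hb
    refine le_trans (le_of_eq ?_) (chsh_aux_bd (a 0).re (a 0).im (a 1).re (a 1).im
      (b 0).re (b 0).im (b 1).re (b 1).im (by linarith) (by linarith))
    simp [dotProduct, Fintype.sum_prod_type]
    ring

theorem chsh_aux_norm :
    ‖toEuclideanCLM (𝕜 := ℂ) (pauliZ ⊗ₖ pauliZ + pauliX ⊗ₖ pauliX)‖ = 2 := by
  have key : ∀ v : EuclideanSpace ℂ (Fin 2 × Fin 2),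
      ‖toEuclideanCLM (𝕜 := ℂ) (pauliZ ⊗ₖ pauliZ + pauliX ⊗ₖ pauliX) v‖ ^ 2
        = 2 * ‖v (0,0) + v (1,1)‖ ^ 2 + 2 * ‖v (1,0) - v (0,1)‖ ^ 2 := by
    intro v
    rw [EuclideanSpace.norm_sq_eq]
    have : ∀ p, (toEuclideanCLM (𝕜 := ℂ) (pauliZ ⊗ₖ pauliZ + pauliX ⊗ₖ pauliX) v) p
      = ((pauliZ ⊗ₖ pauliZ + pauliX ⊗ₖ pauliX) *ᵥ v.ofLp) p := fun p => rfl
    simp only [this, chsh_aux_mulVec]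
    simp [Fintype.sum_prod_type, norm_sub_rev (v (0,1)) (v (1,0))]
    ring
  apply le_antisymm
  · refine ContinuousLinearMap.opNorm_le_bound _ (by norm_num) fun v => ?_
    refine (sq_le_sq₀ (by positivity) (by positivity)).mp ?_
    rw [key, mul_pow, EuclideanSpace.norm_sq_eq]
    simp only [Fintype.sum_prod_type, Fin.sum_univ_two]
    have h1 := parallelogram_law_with_norm ℂ (v (0,0)) (v (1,1))
    have h2 := parallelogram_law_with_norm ℂ (v (1,0)) (v (0,1))
    nlinarith [sq_nonneg ‖v (0,0) - v (1,1)‖, sq_nonneg ‖v (1,0) + v (0,1)‖]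
  · let v : EuclideanSpace ℂ (Fin 2 × Fin 2) :=
      WithLp.toLp 2 (fun p => !![(1:ℂ), 0; 0, 1] p.1 p.2)
    have hv : ‖v‖ ^ 2 = 2 := by
      rw [EuclideanSpace.norm_sq_eq]
      simp [v, Fintype.sum_prod_type]; norm_num
    have hk := key v
    have hk2 : 2 * ‖v (0,0) + v (1,1)‖ ^ 2 + 2 * ‖v (1,0) - v (0,1)‖ ^ 2 = 8 := by
      simp [v]; norm_num
    rw [hk2] at hk
    have hle := ContinuousLinearMap.le_opNorm
      (toEuclideanCLM (𝕜 := ℂ) (pauliZ ⊗ₖ pauliZ + pauliX ⊗ₖ pauliX)) v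
    have hsq := pow_le_pow_left₀ (norm_nonneg _) hle 2
    rw [hk, mul_pow, hv] at hsq
    refine (sq_le_sq₀ (by positivity) (norm_nonneg _)).mp ?_
    linarith

/-- product numerical range of the CHSH operator: the product numerical
range of `X̃⊗X̃ + Z̃⊗Z̃` equals `1`, whereas its operator norm equals `2`. -/
theorem chsh_product_numerical_range :
    pnr (pauliXt ⊗ₖ pauliXt + pauliZt ⊗ₖ pauliZt) = 1 ∧
    ‖toEuclideanCLM (𝕜 := ℂ) (pauliXt ⊗ₖ pauliXt + pauliZt ⊗ₖ pauliZt)‖ = 2 := by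
  rw [chsh_aux_M]
  exact ⟨chsh_aux_pnr, chsh_aux_norm⟩

end
end

section
/- (Performance operator of the CHSH test.) Let X̃ := (Z+X)/√2 and Z̃ := (Z−X)/√2 with X, Z the Pauli matrices on ℂ², let O := √2 (X̃⊗X̃ + Z̃⊗Z̃) be the CHSH observable on H_{A'}⊗H_R = ℂ²⊗ℂ², and let σ := |Φ⁺⟩⟨Φ⁺| on H_A⊗H_R with |Φ⁺⟩ = (|0⟩⊗|0⟩ + |1⟩⊗|1⟩)/√2. Then the performance operator of the pair (O, σ), namely the operator Ω on H_{A'}⊗H_A with entries Ω_{(i',i),(j',j)} = Σ_{r,s} O_{(i',r),(j',s)} σ_{(i,s),(j,r)}, equals O/2 = (X̃⊗X̃ + Z̃⊗Z̃)/√2 (read as a matrix on H_{A'}⊗H_A). -/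
open Matrix Kronecker BigOperators ComplexOrder

noncomputable section

/-- The performance operator of the pair `(O, σ)`:
`Ω_{(i',i),(j',j)} = Σ_{r,s} O_{(i',r),(j',s)} σ_{(i,s),(j,r)}`. -/
def perf {dA dA' dR : ℕ}
    (O : Matrix (Fin dA' × Fin dR) (Fin dA' × Fin dR) ℂ)
    (σ : Matrix (Fin dA × Fin dR) (Fin dA × Fin dR) ℂ) :
    Matrix (Fin dA' × Fin dA) (Fin dA' × Fin dA) ℂ :=
  Matrix.of fun p q => ∑ r, ∑ s, O (p.1, r) (q.1, s) * σ (p.2, s) (q.2, r)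

/-- The maximally entangled two-qubit vector `|Φ⁺⟩ = (|00⟩ + |11⟩)/√2`. -/
def phiPlus : Fin 2 × Fin 2 → ℂ :=
  fun p => if p.1 = p.2 then ((Real.sqrt 2 : ℂ))⁻¹ else 0

/-- performance operator of the CHSH test: with the CHSH observable
`O = √2 (X̃⊗X̃ + Z̃⊗Z̃)` and input `σ = |Φ⁺⟩⟨Φ⁺|`, the performance operator of `(O, σ)`
equals `O/2 = (X̃⊗X̃ + Z̃⊗Z̃)/√2`. -/
theorem chsh_performance_operator :
    perf ((Real.sqrt 2 : ℂ) • (pauliXt ⊗ₖ pauliXt + pauliZt ⊗ₖ pauliZt)) (outer phiPlus)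
      = ((Real.sqrt 2 : ℂ))⁻¹ • (pauliXt ⊗ₖ pauliXt + pauliZt ⊗ₖ pauliZt) := by
  have h0 : (Real.sqrt 2 : ℂ) ≠ 0 := by
    simp
  have h2 : (Real.sqrt 2 : ℂ) ^ 2 = 2 := by
    rw [← Complex.ofReal_pow, Real.sq_sqrt (by norm_num)]; norm_num
  generalize hc : (pauliXt ⊗ₖ pauliXt + pauliZt ⊗ₖ pauliZt) = M
  have hs : ∀ a b c d, M (a, c) (b, d) = M (a, d) (b, c) := by
    intro a b c d
    subst hc
    fin_cases c <;> fin_cases d <;> simp [pauliXt, pauliZt, pauliX, pauliZ]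
  ext ⟨a, i⟩ ⟨b, j⟩
  have key : (Real.sqrt 2 : ℂ) * M (a, j) (b, i) * ((Real.sqrt 2 : ℂ)⁻¹ * (Real.sqrt 2 : ℂ)⁻¹)
      = (Real.sqrt 2 : ℂ)⁻¹ * M (a, i) (b, j) := by
    rw [hs a b j i]
    field_simp
  simp only [perf, outer, phiPlus, Matrix.of_apply, Matrix.vecMulVec_apply, Pi.star_apply,
    Matrix.smul_apply, smul_eq_mul]
  rw [← key]
  fin_cases i <;> fin_cases j <;> simp [Fin.sum_univ_two]

end
end

section
/- (N-independence of the equatorial-ensemble performance operator.) For an integer N ≥ 3 and k ∈ {0, 1, …, N−1}, let |φ_k⟩ := (|0⟩ + e^{2πik/N}|1⟩)/√2 ∈ ℂ². Then (1/N) Σ_{k=0}^{N−1} |φ_k⟩⟨φ_k| ⊗ |φ_k⟩⟨φ_k| = (1/4)(|0⟩⟨0|⊗|0⟩⟨0| + |1⟩⟨1|⊗|1⟩⟨1| + 2|Ψ⁺⟩⟨Ψ⁺|), where |Ψ⁺⟩ := (|0⟩⊗|1⟩ + |1⟩⊗|0⟩)/√2. In particular, the performance operator of the fidelity test for N equally spaced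 equatorial qubit states is the same for every N ≥ 3; also the marginal (1/N) Σ_k |φ_k⟩⟨φ_k| equals I₂/2. -/
open Matrix Kronecker BigOperators ComplexOrder Real

noncomputable section

/-- The equatorial qubit state `|φ_k⟩ = (|0⟩ + e^{2πik/N}|1⟩)/√2`. -/
def eqState (N : ℕ) (k : Fin N) : Fin 2 → ℂ :=
  ![((Real.sqrt 2 : ℂ))⁻¹,
    Complex.exp (2 * Real.pi * Complex.I * (k : ℕ) / N) * ((Real.sqrt 2 : ℂ))⁻¹]

/-- The two-qubit vector `|Ψ⁺⟩ = (|01⟩ + |10⟩)/√2`. -/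
def psiPlus : Fin 2 × Fin 2 → ℂ :=
  fun p => if p.1 ≠ p.2 then ((Real.sqrt 2 : ℂ))⁻¹ else 0

/-- The standard basis vectors of `ℂ²`. -/
def e0 : Fin 2 → ℂ := ![1, 0]
def e1 : Fin 2 → ℂ := ![0, 1]

def ww (N : ℕ) (k : Fin N) : ℂ := Complex.exp (2 * Real.pi * Complex.I * (k : ℕ) / N)

theorem ww_eq (N : ℕ) (k : Fin N) :
    ww N k = (Complex.exp (2 * Real.pi * Complex.I / N)) ^ (k : ℕ) := by
  rw [ww, ← Complex.exp_nat_mul]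
  congr 1
  ring

theorem ww_star_mul (N : ℕ) (k : Fin N) : ww N k * star (ww N k) = 1 := by
  rw [ww, Complex.star_def, ← Complex.exp_conj, ← Complex.exp_add]
  have h2 : (starRingEnd ℂ) 2 = 2 := Complex.conj_ofNat 2
  simp [neg_div, h2]

theorem ww_sum_pow (N : ℕ) (hN : 3 ≤ N) (j : ℕ) (h0 : 0 < j) (hj : j < N) :
    ∑ k : Fin N, (ww N k) ^ j = 0 := by
  have hp := Complex.isPrimitiveRoot_exp N (by omega)
  have hne : Complex.exp (2 * Real.pi * Complex.I / N) ^ j ≠ 1 :=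
    hp.pow_ne_one_of_pos_of_lt (by omega) hj
  have h1 : ∀ k : Fin N, (ww N k) ^ j
      = (Complex.exp (2 * Real.pi * Complex.I / N) ^ j) ^ (k : ℕ) := by
    intro k
    rw [ww_eq, ← pow_mul, ← pow_mul, mul_comm (k : ℕ) j]
  rw [Finset.sum_congr rfl (fun k _ => h1 k),
    Fin.sum_univ_eq_sum_range (fun i => (Complex.exp (2 * Real.pi * Complex.I / N) ^ j) ^ i) N,
    geom_sum_eq hne, ← pow_mul, mul_comm j N, pow_mul, hp.pow_eq_one]
  simp

theorem ww_sum_star_pow (N : ℕ) (hN : 3 ≤ N) (j : ℕ) (h0 : 0 < j) (hj : j < N) :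
    ∑ k : Fin N, (star (ww N k)) ^ j = 0 := by
  have h := congrArg star (ww_sum_pow N hN j h0 hj)
  simpa using h

theorem sq_half : ((Real.sqrt 2 : ℂ))⁻¹ * ((Real.sqrt 2 : ℂ))⁻¹ = (2 : ℂ)⁻¹ := by
  rw [← mul_inv, ← Complex.ofReal_mul, Real.mul_self_sqrt (by norm_num)]
  simp

theorem outer_eq (N : ℕ) (k : Fin N) :
    outer (eqState N k) = !![2⁻¹, 2⁻¹ * star (ww N k); 2⁻¹ * ww N k, 2⁻¹] := by
  have h := ww_star_mul N k
  have hs := sq_half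
  ext i j
  have e : eqState N k = ![((Real.sqrt 2 : ℂ))⁻¹, ww N k * ((Real.sqrt 2 : ℂ))⁻¹] := rfl
  rw [e]
  generalize ww N k = w at *
  fin_cases i <;> fin_cases j <;> simp [outer, Matrix.vecMulVec_apply] at * <;> grind

theorem outer_psi (p q : Fin 2 × Fin 2) :
    outer psiPlus p q = if p.1 ≠ p.2 ∧ q.1 ≠ q.2 then 2⁻¹ else 0 := by
  have hs := sq_half
  by_cases h1 : p.1 = p.2 <;> by_cases h2 : q.1 = q.2 <;>
    simp [outer, Matrix.vecMulVec_apply, psiPlus, h1, h2, hs]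

/-- N-independence of the equatorial-ensemble performance operator:
for every `N ≥ 3`,
`(1/N) Σ_k |φ_k⟩⟨φ_k| ⊗ |φ_k⟩⟨φ_k| = (1/4)(|0⟩⟨0|⊗|0⟩⟨0| + |1⟩⟨1|⊗|1⟩⟨1| + 2|Ψ⁺⟩⟨Ψ⁺|)`,
and the marginal `(1/N) Σ_k |φ_k⟩⟨φ_k|` equals `I/2`. -/
theorem equatorial_performance_operator (N : ℕ) (hN : 3 ≤ N) :
    ((N : ℂ))⁻¹ • (∑ k : Fin N, outer (eqState N k) ⊗ₖ outer (eqState N k)) =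
      ((4 : ℂ))⁻¹ • (outer e0 ⊗ₖ outer e0 + outer e1 ⊗ₖ outer e1 +
        (2 : ℂ) • outer psiPlus) ∧
    ((N : ℂ))⁻¹ • (∑ k : Fin N, outer (eqState N k)) =
      ((2 : ℂ))⁻¹ • (1 : Matrix (Fin 2) (Fin 2) ℂ) := by
  have hN0 : (N : ℂ) ≠ 0 := by
    have : N ≠ 0 := by omega
    exact_mod_cast this
  have a1 := ww_sum_pow N hN 1 (by omega) (by omega)
  have a2 := ww_sum_pow N hN 2 (by omega) (by omega)
  have b1 := ww_sum_star_pow N hN 1 (by omega) (by omega)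
  have b2 := ww_sum_star_pow N hN 2 (by omega) (by omega)
  have c := ww_star_mul N
  simp only [pow_one] at a1 b1
  have key : ∀ (f : Fin N → ℂ) (x y z u t : ℂ),
      (∀ k, f k = x + y * ww N k + z * star (ww N k) + u * ww N k ^ 2 + t * star (ww N k) ^ 2) →
      (N : ℂ)⁻¹ * ∑ k, f k = x := by
    intro f x y z u t hf
    rw [Finset.sum_congr rfl (fun k _ => hf k)]
    simp only [Finset.sum_add_distrib, ← Finset.mul_sum, a1, a2, b1, b2]
    simp [hN0]
  simp only [outer_eq]
  constructor
  · ext ⟨i, j⟩ ⟨i', j'⟩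
    rw [Matrix.smul_apply, Matrix.sum_apply, smul_eq_mul]
    have hx : ∃ y z u t : ℂ, ∀ k, (!![2⁻¹, 2⁻¹ * star (ww N k); 2⁻¹ * ww N k, 2⁻¹] ⊗ₖ
        !![2⁻¹, 2⁻¹ * star (ww N k); 2⁻¹ * ww N k, 2⁻¹]) (i, j) (i', j') =
        (if (i : ℕ) + j = i' + j' then (4 : ℂ)⁻¹ else 0)
        + y * ww N k + z * star (ww N k) + u * ww N k ^ 2 + t * star (ww N k) ^ 2 := by
      refine ⟨if (i : ℕ) + j = i' + j' + 1 then 4⁻¹ else 0,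
        if (i : ℕ) + j + 1 = i' + j' then 4⁻¹ else 0,
        if (i : ℕ) + j = i' + j' + 2 then 4⁻¹ else 0,
        if (i : ℕ) + j + 2 = i' + j' then 4⁻¹ else 0, fun k => ?_⟩
      have ck := c k
      rw [Matrix.kroneckerMap_apply]
      generalize ww N k = w at *
      generalize star w = v at *
      clear * - ck
      fin_cases i <;> fin_cases j <;> fin_cases i' <;> fin_cases j' <;> simp <;> grind
    obtain ⟨y, z, u, t, h⟩ := hx
    rw [key _ _ y z u t h]
    clear * -
    simp only [Matrix.smul_apply, Matrix.add_apply, outer_psi, Matrix.kroneckerMap_apply]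
    fin_cases i <;> fin_cases j <;> fin_cases i' <;> fin_cases j' <;>
      simp [outer, Matrix.vecMulVec_apply, e0, e1]
  · ext i j
    rw [Matrix.smul_apply, Matrix.sum_apply, smul_eq_mul]
    fin_cases i <;> fin_cases j
    · refine (key _ 2⁻¹ 0 0 0 0 (fun k => ?_)).trans ?_ <;> simp
    · refine (key _ 0 0 2⁻¹ 0 0 (fun k => ?_)).trans ?_ <;> simp
    · refine (key _ 0 2⁻¹ 0 0 0 (fun k => ?_)).trans ?_ <;> simp
    · refine (key _ 2⁻¹ 0 0 0 0 (fun k => ?_)).trans ?_ <;> simp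

end
end

section
/- (Product numerical range for the equatorial-qubit test.) Let Ω := (1/4)(|0⟩⟨0|⊗|0⟩⟨0| + |1⟩⟨1|⊗|1⟩⟨1| + 2|Ψ⁺⟩⟨Ψ⁺|) on ℂ²⊗ℂ², with |Ψ⁺⟩ = (|0⟩⊗|1⟩ + |1⟩⊗|0⟩)/√2. Then sup{⟨a⊗b, Ω(a⊗b)⟩ : a, b ∈ ℂ² unit vectors} = 3/8; equivalently, the product numerical range Λ⊗(Ω) equals 3/8. -/
open Matrix Kronecker BigOperators ComplexOrder

noncomputable section

/-- The performance operator of the equatorial-qubit fidelity test: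
`Ω = (1/4)(|0⟩⟨0|⊗|0⟩⟨0| + |1⟩⟨1|⊗|1⟩⟨1| + 2|Ψ⁺⟩⟨Ψ⁺|)`. -/
def eqOmega : Matrix (Fin 2 × Fin 2) (Fin 2 × Fin 2) ℂ :=
  ((4 : ℂ))⁻¹ • (outer e0 ⊗ₖ outer e0 + outer e1 ⊗ₖ outer e1 + (2 : ℂ) • outer psiPlus)

theorem eq_val (a b : Fin 2 → ℂ) :
    (star (fun p : Fin 2 × Fin 2 => a p.1 * b p.2) ⬝ᵥ
          eqOmega *ᵥ (fun p : Fin 2 × Fin 2 => a p.1 * b p.2)).re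
    = (‖a 0‖^2 * ‖b 0‖^2 + ‖a 1‖^2 * ‖b 1‖^2 + ‖a 0 * b 1 + a 1 * b 0‖^2) / 4 := by
  have h2 : ((Real.sqrt 2 : ℂ))⁻¹ * ((Real.sqrt 2 : ℂ))⁻¹ = 1 / 2 := by
    rw [← mul_inv, ← Complex.ofReal_mul, Real.mul_self_sqrt (by norm_num)]
    norm_num
  have key : (star (fun p : Fin 2 × Fin 2 => a p.1 * b p.2) ⬝ᵥ
          eqOmega *ᵥ (fun p : Fin 2 × Fin 2 => a p.1 * b p.2))
      = (star (a 0) * star (b 0) * (a 0 * b 0) + star (a 1) * star (b 1) * (a 1 * b 1)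
        + (star (a 0) * star (b 1) + star (a 1) * star (b 0)) * (a 0 * b 1 + a 1 * b 0)) / 4 := by
    simp only [eqOmega, outer, dotProduct, Matrix.mulVec, Fintype.sum_prod_type,
      Fin.sum_univ_two, Matrix.add_apply, Matrix.smul_apply, Matrix.kroneckerMap_apply,
      Matrix.vecMulVec_apply, Pi.star_apply]
    simp [psiPlus, e0, e1, h2]
    ring
  rw [key]
  simp only [← Complex.normSq_eq_norm_sq, Complex.normSq_apply]
  simp
  ring

theorem eq_bound (a b : Fin 2 → ℂ) (ha : (∑ i, ‖a i‖ ^ 2) = 1) (hb : (∑ i, ‖b i‖ ^ 2) = 1) :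
    (‖a 0‖^2 * ‖b 0‖^2 + ‖a 1‖^2 * ‖b 1‖^2 + ‖a 0 * b 1 + a 1 * b 0‖^2) / 4 ≤ 3 / 8 := by
  rw [Fin.sum_univ_two] at ha hb
  have h := norm_add_le (a 0 * b 1) (a 1 * b 0)
  rw [norm_mul, norm_mul] at h
  have h' := pow_le_pow_left₀ (norm_nonneg _) h 2
  have n0 := norm_nonneg (a 0)
  have n1 := norm_nonneg (a 1)
  have m0 := norm_nonneg (b 0)
  have m1 := norm_nonneg (b 1)
  generalize ‖a 0‖ = x at *
  generalize ‖a 1‖ = y at *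
  generalize ‖b 0‖ = z at *
  generalize ‖b 1‖ = w at *
  have hxy : x * y ≤ 1 / 2 := by nlinarith [sq_nonneg (x - y)]
  have hzw : z * w ≤ 1 / 2 := by nlinarith [sq_nonneg (z - w)]
  have hp : (x * y) * (z * w) ≤ 1 / 2 * (1 / 2) :=
    mul_le_mul hxy hzw (by positivity) (by norm_num)
  have e : (x^2 + y^2) * (z^2 + w^2) = 1 := by rw [ha, hb]; norm_num
  nlinarith

/-- product numerical range for the equatorial-qubit test:
`Λ⊗(Ω) = 3/8` for `Ω = (1/4)(|0⟩⟨0|⊗|0⟩⟨0| + |1⟩⟨1|⊗|1⟩⟨1| + 2|Ψ⁺⟩⟨Ψ⁺|)`. -/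
theorem equatorial_pnr : pnr eqOmega = 3 / 8 := by
  have hs : ‖((Real.sqrt 2 : ℂ))⁻¹‖ ^ 2 = 1 / 2 := by
    rw [norm_inv, inv_pow, Complex.norm_real, Real.norm_eq_abs, sq_abs,
      Real.sq_sqrt (by norm_num)]
    norm_num
  apply IsGreatest.csSup_eq
  constructor
  · refine ⟨fun _ => ((Real.sqrt 2 : ℂ))⁻¹, fun _ => ((Real.sqrt 2 : ℂ))⁻¹, ?_, ?_, ?_⟩
    · rw [Fin.sum_univ_two, hs]; norm_num
    · rw [Fin.sum_univ_two, hs]; norm_num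
    · rw [eq_val (fun _ => ((Real.sqrt 2 : ℂ))⁻¹) (fun _ => ((Real.sqrt 2 : ℂ))⁻¹)]
      rw [← two_mul, ← two_mul, norm_mul, norm_mul, mul_pow, mul_pow, hs]
      norm_num
  · rintro r ⟨a, b, ha, hb, rfl⟩
    rw [eq_val]
    exact eq_bound a b ha hb

end
end
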